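/- Let N, M, d, G be positive integers, H an N×M complex matrix, σ > 0, and g₀ ∈ {1,…,G}. For a family V = (V_1,…,V_G) of M×d complex matrices define X(V) = Σ_{g=1}^G H V_g V_gᴴ Hᴴ + σ² I_N and J(V) = (X(V) − H V_{g₀} V_{g₀}ᴴ Hᴴ)⁻¹. Fix an expansion family V⁰ = (V⁰_1,…,V⁰_G) and set U⁰ = X(V⁰)⁻¹ H V⁰_{g₀}, Q⁰ = I_d − (U⁰)ᴴ H V⁰_{g₀}, Â = Hᴴ U⁰ (Q⁰)⁻¹ (U⁰)ᴴ H, B̂ = −(Q⁰)⁻¹ (U⁰)ᴴ H, b̂ = Re Tr((Q⁰)⁻¹ (I_d + σ² (U⁰)ᴴ U⁰)) + log((det Q⁰).re) − d, and h(V) = Σ_{g=1}^G Re Tr(V_gᴴ Â V_g) + 2 Re Tr(B̂ V_{g₀}) + b̂. Then for every family V of M×d complex matrices, h(V) ≥ − log((det(I_N + H V_{g₀} V_{g₀}ᴴ Hᴴ J(V))).re). -/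

import Mathlib

open Matrix BigOperators

/-- The interference-plus-signal covariance `X(V) = ∑ g, H V_g V_gᴴ Hᴴ + σ² I_N`. -/
noncomputable def Xmat {N M d G : ℕ} (H : Matrix (Fin N) (Fin M) ℂ) (σ : ℝ)
    (V : Fin G → Matrix (Fin M) (Fin d) ℂ) : Matrix (Fin N) (Fin N) ℂ :=
  (∑ g, H * V g * (V g)ᴴ * Hᴴ) + ((σ : ℂ) ^ 2) • (1 : Matrix (Fin N) (Fin N) ℂ)

/-- `J(V) = (X(V) − H V_{g₀} V_{g₀}ᴴ Hᴴ)⁻¹`, the inverse interference-plus-noise covariance. -/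
noncomputable def Jmat {N M d G : ℕ} (H : Matrix (Fin N) (Fin M) ℂ) (σ : ℝ) (g₀ : Fin G)
    (V : Fin G → Matrix (Fin M) (Fin d) ℂ) : Matrix (Fin N) (Fin N) ℂ :=
  (Xmat H σ V - H * V g₀ * (V g₀)ᴴ * Hᴴ)⁻¹

section helpers
open scoped ComplexOrder MatrixOrder

lemma aux_fact {n : ℕ} {P : Matrix (Fin n) (Fin n) ℂ} (hP : P.PosSemidef) :
    ∃ C : Matrix (Fin n) (Fin n) ℂ, P = Cᴴ * C := by
  obtain ⟨C, hC⟩ := CStarAlgebra.nonneg_iff_eq_star_mul_self.mp hP.nonneg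
  exact ⟨C, hC⟩

lemma aux_trace_mul_nonneg {n : ℕ} {P F : Matrix (Fin n) (Fin n) ℂ} (hP : P.PosSemidef)
    (hF : F.PosSemidef) : 0 ≤ ((P * F).trace).re := by
  obtain ⟨C, rfl⟩ := aux_fact hP
  have h1 := (hF.mul_mul_conjTranspose_same C).trace_nonneg
  have h2 : (Cᴴ * C * F).trace = (C * F * Cᴴ).trace := by
    rw [Matrix.mul_assoc, Matrix.trace_mul_comm]
  rw [h2]
  exact (Complex.le_def.mp h1).1

lemma aux_trace_log1 {n : ℕ} {K : Matrix (Fin n) (Fin n) ℂ} (hK : K.PosDef) :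
    Real.log (K.det.re) ≤ (K.trace).re - n := by
  have h1 : K.det.re = ∏ i, hK.1.eigenvalues i := by
    rw [hK.1.det_eq_prod_eigenvalues]
    have : (∏ i, ((hK.1.eigenvalues i : ℝ) : ℂ)) = ((∏ i, hK.1.eigenvalues i : ℝ) : ℂ) := by
      push_cast; rfl
    exact (congrArg Complex.re this).trans (Complex.ofReal_re _)
  have h2 : K.trace.re = ∑ i, hK.1.eigenvalues i := by
    rw [hK.1.trace_eq_sum_eigenvalues]
    have : (∑ i, ((hK.1.eigenvalues i : ℝ) : ℂ)) = ((∑ i, hK.1.eigenvalues i : ℝ) : ℂ) := by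
      push_cast; rfl
    exact (congrArg Complex.re this).trans (Complex.ofReal_re _)
  rw [h1, h2, Real.log_prod (fun i _ => (hK.eigenvalues_pos i).ne')]
  have : (∑ i, hK.1.eigenvalues i) - n = ∑ i, (hK.1.eigenvalues i - 1) := by
    simp [Finset.sum_sub_distrib]
  rw [this]
  exact Finset.sum_le_sum fun i _ => Real.log_le_sub_one_of_pos (hK.eigenvalues_pos i)

lemma aux_det_re {n : ℕ} {K : Matrix (Fin n) (Fin n) ℂ} (hK : K.PosDef) :
    0 < K.det.re ∧ K.det.im = 0 := by
  have := Complex.lt_def.mp hK.det_pos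
  exact ⟨this.1, this.2.symm⟩

lemma aux_trace_log {n : ℕ} {Q F : Matrix (Fin n) (Fin n) ℂ} (hQ : Q.PosDef)
    (hF : F.PosDef) :
    Real.log (F.det.re) ≤ ((Q⁻¹ * F).trace).re - n + Real.log (Q.det.re) := by
  obtain ⟨C, hC⟩ := aux_fact hQ.inv.posSemidef
  have hCu : IsUnit C := by
    have h := hQ.inv.isUnit
    rw [hC, Matrix.isUnit_iff_isUnit_det, Matrix.det_mul] at h
    rw [Matrix.isUnit_iff_isUnit_det]
    exact isUnit_of_mul_isUnit_right h
  have hK : (C * F * Cᴴ).PosDef :=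
    hF.mul_mul_conjTranspose_same (Matrix.vecMul_injective_iff_isUnit.mpr hCu)
  have h1 := aux_trace_log1 hK
  have h2 : (C * F * Cᴴ).trace = (Q⁻¹ * F).trace := by
    rw [hC, Matrix.mul_assoc Cᴴ, Matrix.trace_mul_comm Cᴴ]
  have h3 : (C * F * Cᴴ).det * Q.det = F.det := by
    have : (C * F * Cᴴ).det = (Q⁻¹).det * F.det := by
      rw [hC]; simp only [Matrix.det_mul]; ring
    have h4 : (Q⁻¹).det * Q.det = 1 := by
      rw [← Matrix.det_mul, Matrix.nonsing_inv_mul _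
        ((Matrix.isUnit_iff_isUnit_det _).mp hQ.isUnit), Matrix.det_one]
    rw [this, mul_right_comm, h4, one_mul]
  have h5 : (C * F * Cᴴ).det.re * Q.det.re = F.det.re := by
    rw [← h3, Complex.mul_re, (aux_det_re hQ).2]; ring
  rw [← h5, Real.log_mul (aux_det_re hK).1.ne' (aux_det_re hQ).1.ne', ← h2]
  linarith

lemma aux_posdef {n d : ℕ} {S : Matrix (Fin n) (Fin n) ℂ} (hS : S.PosDef)
    (W : Matrix (Fin n) (Fin d) ℂ) :
    (1 - Wᴴ * (S + W * Wᴴ)⁻¹ * W).PosDef := by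
  have hX : (S + W * Wᴴ).PosDef := hS.add_posSemidef (posSemidef_self_mul_conjTranspose W)
  have hT : (1 + Wᴴ * S⁻¹ * W).PosDef :=
    Matrix.PosDef.one.add_posSemidef (hS.inv.posSemidef.conjTranspose_mul_mul_same W)
  have hSu := (Matrix.isUnit_iff_isUnit_det _).mp hS.isUnit
  have hXu := (Matrix.isUnit_iff_isUnit_det _).mp hX.isUnit
  have key : (S + W * Wᴴ)⁻¹ * (W * Wᴴ) * S⁻¹ = S⁻¹ - (S + W * Wᴴ)⁻¹ := by
    have : W * Wᴴ = (S + W * Wᴴ) - S := by abel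
    generalize S + W * Wᴴ = X at *
    rw [this, Matrix.mul_sub, Matrix.sub_mul, Matrix.nonsing_inv_mul _ hXu, Matrix.one_mul,
      Matrix.mul_assoc, Matrix.mul_nonsing_inv _ hSu, Matrix.mul_one]
  have : (1 - Wᴴ * (S + W * Wᴴ)⁻¹ * W) * (1 + Wᴴ * S⁻¹ * W) = 1 := by
    have e : Wᴴ * (S + W * Wᴴ)⁻¹ * W * (Wᴴ * S⁻¹ * W)
        = Wᴴ * ((S + W * Wᴴ)⁻¹ * (W * Wᴴ) * S⁻¹) * W := by
      simp only [Matrix.mul_assoc]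
    rw [Matrix.sub_mul, Matrix.one_mul, Matrix.mul_add, Matrix.mul_one, e, key, Matrix.mul_sub,
      Matrix.sub_mul]
    abel
  rw [← Matrix.inv_eq_left_inv this]
  exact hT.inv

lemma aux_det {n d : ℕ} {S : Matrix (Fin n) (Fin n) ℂ} (hS : S.PosDef)
    (W : Matrix (Fin n) (Fin d) ℂ) :
    (1 + W * Wᴴ * S⁻¹).det * (1 - Wᴴ * (S + W * Wᴴ)⁻¹ * W).det = 1 := by
  have hX : (S + W * Wᴴ).PosDef := hS.add_posSemidef (posSemidef_self_mul_conjTranspose W)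
  have hSu := (Matrix.isUnit_iff_isUnit_det _).mp hS.isUnit
  have hXu := (Matrix.isUnit_iff_isUnit_det _).mp hX.isUnit
  have h1 : 1 + W * Wᴴ * S⁻¹ = (S + W * Wᴴ) * S⁻¹ := by
    rw [Matrix.add_mul, Matrix.mul_nonsing_inv _ hSu]
  have h2 : (1 - Wᴴ * (S + W * Wᴴ)⁻¹ * W).det = (S * (S + W * Wᴴ)⁻¹).det := by
    rw [Matrix.det_one_sub_mul_comm]
    congr 1
    have := Matrix.mul_nonsing_inv _ hXu
    rw [Matrix.add_mul] at this
    rw [← this, Matrix.mul_assoc]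
    abel
  rw [h1, h2, ← Matrix.det_mul, Matrix.mul_assoc, ← Matrix.mul_assoc S⁻¹,
    Matrix.nonsing_inv_mul _ hSu, Matrix.one_mul, Matrix.mul_nonsing_inv _ hXu, Matrix.det_one]

lemma aux_core {n d : ℕ} {S Q : Matrix _ _ ℂ} (hS : S.PosDef) (hQ : Q.PosDef)
    (W U : Matrix (Fin n) (Fin d) ℂ) :
    - Real.log ((1 + W * Wᴴ * S⁻¹).det.re) ≤
      ((Q⁻¹ * (1 - Uᴴ * W - Wᴴ * U + Uᴴ * (S + W * Wᴴ) * U)).trace).re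
        + Real.log Q.det.re - d := by
  have hX : (S + W * Wᴴ).PosDef := hS.add_posSemidef (posSemidef_self_mul_conjTranspose W)
  have hXu := (Matrix.isUnit_iff_isUnit_det _).mp hX.isUnit
  have hF := aux_posdef hS W
  have hdet := aux_det hS W
  generalize S + W * Wᴴ = X at *
  have hXi : (X⁻¹)ᴴ = X⁻¹ := hX.inv.1
  have hE : 1 - Uᴴ * W - Wᴴ * U + Uᴴ * X * U
      = (1 - Wᴴ * X⁻¹ * W) + (U - X⁻¹ * W)ᴴ * X * (U - X⁻¹ * W) := by
    rw [conjTranspose_sub, conjTranspose_mul, hXi, Matrix.sub_mul, Matrix.mul_assoc _ X⁻¹ X,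
      Matrix.nonsing_inv_mul _ hXu, Matrix.mul_one, Matrix.sub_mul, Matrix.mul_sub, Matrix.mul_sub,
      Matrix.mul_assoc Uᴴ X (X⁻¹ * W), ← Matrix.mul_assoc X, Matrix.mul_nonsing_inv _ hXu,
      Matrix.one_mul, ← Matrix.mul_assoc Wᴴ X⁻¹]
    abel
  have h1 := aux_trace_mul_nonneg hQ.inv.posSemidef
    (hX.posSemidef.conjTranspose_mul_mul_same (U - X⁻¹ * W))
  have h2 := aux_trace_log hQ hF
  rw [hE, Matrix.mul_add, Matrix.trace_add, Complex.add_re]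
  have h3 : (1 + W * Wᴴ * S⁻¹).det.re * (1 - Wᴴ * X⁻¹ * W).det.re = 1 := by
    have := congrArg Complex.re hdet
    rwa [Complex.mul_re, (aux_det_re hF).2, mul_zero, sub_zero, Complex.one_re] at this
  have h4 : (1 + W * Wᴴ * S⁻¹).det.re = ((1 - Wᴴ * X⁻¹ * W).det.re)⁻¹ :=
    eq_inv_of_mul_eq_one_left h3
  rw [h4, Real.log_inv]
  linarith

lemma aux_S {N M d G : ℕ} (H : Matrix (Fin N) (Fin M) ℂ) (σ : ℝ) (hσ : 0 < σ) (g₀ : Fin G)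
    (V : Fin G → Matrix (Fin M) (Fin d) ℂ) :
    (Xmat H σ V - (H * V g₀) * (H * V g₀)ᴴ).PosDef := by
  have h1 : Xmat H σ V - (H * V g₀) * (H * V g₀)ᴴ
      = ((σ : ℂ) ^ 2) • (1 : Matrix (Fin N) (Fin N) ℂ)
        + ∑ g ∈ Finset.univ.erase g₀, (H * V g) * (H * V g)ᴴ := by
    unfold Xmat
    rw [← Finset.add_sum_erase _ _ (Finset.mem_univ g₀)]
    simp only [conjTranspose_mul, Matrix.mul_assoc]
    abel
  rw [h1]
  refine Matrix.PosDef.add_posSemidef (Matrix.PosDef.one.smul ?_)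
    (posSemidef_sum _ fun g _ => posSemidef_self_mul_conjTranspose _)
  rw [← Complex.ofReal_pow]
  exact_mod_cast (by positivity : 0 < σ ^ 2)

lemma aux_main {N M d G : ℕ} (H : Matrix (Fin N) (Fin M) ℂ) (σ : ℝ) (hσ : 0 < σ) (g₀ : Fin G)
    (V0 : Fin G → Matrix (Fin M) (Fin d) ℂ)
    (U0 : Matrix (Fin N) (Fin d) ℂ) (hU0 : U0 = (Xmat H σ V0)⁻¹ * (H * V0 g₀))
    (Q0 : Matrix (Fin d) (Fin d) ℂ) (hQ0 : Q0 = 1 - U0ᴴ * (H * V0 g₀))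
    (V : Fin G → Matrix (Fin M) (Fin d) ℂ) :
    (∑ g, (((V g)ᴴ * (Hᴴ * U0 * Q0⁻¹ * U0ᴴ * H) * V g).trace).re)
      + 2 * ((-(Q0⁻¹ * U0ᴴ * H) * V g₀).trace).re
      + (((Q0⁻¹ * (1 + ((σ : ℂ) ^ 2) • (U0ᴴ * U0))).trace).re
      + Real.log (Q0.det.re) - d) ≥ - Real.log ((((1 : Matrix (Fin N) (Fin N) ℂ)
          + H * V g₀ * (V g₀)ᴴ * Hᴴ * Jmat H σ g₀ V).det).re) := by
  have hX0 : (Xmat H σ V0).PosDef := by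
    have := (aux_S H σ hσ g₀ V0).add_posSemidef
      (posSemidef_self_mul_conjTranspose (H * V0 g₀))
    rwa [sub_add_cancel] at this
  have hQ : Q0.PosDef := by
    have := aux_posdef (aux_S H σ hσ g₀ V0) (H * V0 g₀)
    rw [sub_add_cancel] at this
    rwa [hQ0, hU0, conjTranspose_mul, hX0.inv.1]
  have hc := aux_core (aux_S H σ hσ g₀ V) hQ (H * V g₀) U0
  rw [sub_add_cancel] at hc
  have hJ : H * V g₀ * (V g₀)ᴴ * Hᴴ = (H * V g₀) * (H * V g₀)ᴴ := by
    simp only [conjTranspose_mul, Matrix.mul_assoc]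
  unfold Jmat
  rw [hJ]
  refine ge_iff_le.mpr (hc.trans (le_of_eq ?_))
  have hPh : (Q0⁻¹)ᴴ = Q0⁻¹ := hQ.inv.1
  generalize Q0⁻¹ = P at *
  have e1 : ∀ g, ((V g)ᴴ * (Hᴴ * U0 * P * U0ᴴ * H) * V g).trace
      = (P * (U0ᴴ * (H * V g * (V g)ᴴ * Hᴴ) * U0)).trace := by
    intro g
    have : (V g)ᴴ * (Hᴴ * U0 * P * U0ᴴ * H) * V g
      = ((V g)ᴴ * Hᴴ * U0) * (P * (U0ᴴ * H * V g)) := by simp only [Matrix.mul_assoc]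
    rw [this, Matrix.trace_mul_comm]
    simp only [Matrix.mul_assoc]
  have e2 : (P * ((H * V g₀)ᴴ * U0)).trace.re = (P * (U0ᴴ * (H * V g₀))).trace.re := by
    have : (P * ((H * V g₀)ᴴ * U0)).trace = star (P * (U0ᴴ * (H * V g₀))).trace := by
      rw [← Matrix.trace_conjTranspose, conjTranspose_mul P, hPh, Matrix.trace_mul_comm,
        conjTranspose_mul U0ᴴ, conjTranspose_conjTranspose]
    rw [this]; simp
  have e3 : (-(P * U0ᴴ * H) * V g₀).trace.re = - (P * (U0ᴴ * (H * V g₀))).trace.re := by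
    simp [Matrix.mul_assoc]
  have e4 : (∑ g, (((V g)ᴴ * (Hᴴ * U0 * P * U0ᴴ * H) * V g).trace).re)
      = (P * (U0ᴴ * (∑ g, H * V g * (V g)ᴴ * Hᴴ) * U0)).trace.re := by
    simp_rw [e1]
    rw [Matrix.mul_sum, Matrix.sum_mul, Matrix.mul_sum, Matrix.trace_sum, Complex.re_sum]
  rw [e4, e3]
  unfold Xmat
  simp only [Matrix.mul_add, Matrix.add_mul, Matrix.mul_sub, Matrix.trace_add, Matrix.trace_sub,
    Complex.add_re, Complex.sub_re, e2, Matrix.mul_smul, Matrix.smul_mul, Matrix.mul_one]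
  ring

end helpers

/-- Property C.a of Appendix C: the quadratic majorizer `h` upper bounds
`− log det(I + H V_{g₀} V_{g₀}ᴴ Hᴴ J(V))`. -/
theorem stmt2 (N M d G : ℕ) (hN : 0 < N) (hM : 0 < M) (hd : 0 < d) (hG : 0 < G)
    (H : Matrix (Fin N) (Fin M) ℂ) (σ : ℝ) (hσ : 0 < σ) (g₀ : Fin G)
    (V0 : Fin G → Matrix (Fin M) (Fin d) ℂ)
    (U0 : Matrix (Fin N) (Fin d) ℂ) (hU0 : U0 = (Xmat H σ V0)⁻¹ * (H * V0 g₀))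
    (Q0 : Matrix (Fin d) (Fin d) ℂ) (hQ0 : Q0 = 1 - U0ᴴ * (H * V0 g₀))
    (A : Matrix (Fin M) (Fin M) ℂ) (hA : A = Hᴴ * U0 * Q0⁻¹ * U0ᴴ * H)
    (B : Matrix (Fin d) (Fin M) ℂ) (hB : B = -(Q0⁻¹ * U0ᴴ * H))
    (b : ℝ)
    (hb : b = ((Q0⁻¹ * (1 + ((σ : ℂ) ^ 2) • (U0ᴴ * U0))).trace).re
      + Real.log (Q0.det.re) - d)
    (h : (Fin G → Matrix (Fin M) (Fin d) ℂ) → ℝ)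
    (hh : ∀ V, h V = (∑ g, (((V g)ᴴ * A * V g).trace).re)
      + 2 * ((B * V g₀).trace).re + b) :
    ∀ (V : Fin G → Matrix (Fin M) (Fin d) ℂ),
      h V ≥ - Real.log ((((1 : Matrix (Fin N) (Fin N) ℂ)
          + H * V g₀ * (V g₀)ᴴ * Hᴴ * Jmat H σ g₀ V).det).re) := by
  intro V
  rw [hh V, hA, hB, hb]
  exact aux_main H σ hσ g₀ V0 U0 hU0 Q0 hQ0 V
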